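/- Let S be a set of 2k points in the plane in general position. Suppose S has a non-crossing perfect matching M containing two pairs {A,B} and {C,D} such that A lies on the boundary of the convex hull of S and the segment AB pierces the segment CD (i.e., the closed segments AB and CD are disjoint, but the line through A and B meets the closed segment CD). Then the number of non-crossing perfect matchings of S is strictly greater than C_k: pm(S) > C_k. -/

import Mathlib

open scoped Classical

/-- Points in the plane. -/
abbrev Pt : Type := ℝ × ℝ

/-- A finite planar point set is in *general position* if no three of its
points are collinear. -/
def GeneralPosition (S : Finset Pt) : Prop :=
  ∀ p ∈ S, ∀ q ∈ S, ∀ r ∈ S, p ≠ q → p ≠ r → q ≠ r →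
    ¬ Collinear ℝ ({p, q, r} : Set Pt)

/-- The closed straight-line segment spanned by an unordered pair of points. -/
noncomputable def seg : Sym2 Pt → Set Pt :=
  Sym2.lift ⟨fun a b => segment ℝ a b, fun a b => segment_symm ℝ a b⟩

/-- `M` is a non-crossing perfect matching of `S`: a partition of `S` into
unordered pairs (of distinct points) whose closed segments are pairwise disjoint. -/
def IsNCMatching (S : Finset Pt) (M : Finset (Sym2 Pt)) : Prop :=
  (∀ e ∈ M, ¬ e.IsDiag) ∧
  (∀ e ∈ M, ∀ p, p ∈ e → p ∈ S) ∧
  (∀ p ∈ S, ∃! e, e ∈ M ∧ p ∈ e) ∧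
  (∀ e ∈ M, ∀ f ∈ M, e ≠ f → Disjoint (seg e) (seg f))

/-- The number of non-crossing perfect matchings of `S`. -/
noncomputable def pm (S : Finset Pt) : ℕ :=
  Set.ncard {M : Finset (Sym2 Pt) | IsNCMatching S M}

/-- `S` is in convex position: no point of `S` lies in the convex hull of the
other points. -/
def ConvexPosition (S : Finset Pt) : Prop :=
  ∀ p ∈ S, p ∉ convexHull ℝ (↑(S.erase p) : Set Pt)

/-- The signed side of `X` with respect to the directed line from `Q` to `P`.
The two open half-planes bounded by the line through `Q` and `P` are
`{X | 0 < sideOf Q P X}` and `{X | sideOf Q P X < 0}`. -/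
def sideOf (Q P X : Pt) : ℝ :=
  (P.1 - Q.1) * (X.2 - Q.2) - (P.2 - Q.2) * (X.1 - Q.1)

/-- Segment `AB` pierces segment `CD`: the closed segments are disjoint, but the
affine line through `A` and `B` meets the closed segment `CD`. -/
def Pierces (A B C D : Pt) : Prop :=
  Disjoint (segment ℝ A B) (segment ℝ C D) ∧
  ((affineSpan ℝ ({A, B} : Set Pt) : Set Pt) ∩ segment ℝ C D).Nonempty

/-- The matching `M` of `S` has the *piercing property*: it contains pairs
`{A,B}` and `{C,D}` with `A` on the boundary of the convex hull of `S`
and `AB` piercing `CD`. -/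
def HasPiercing (S : Finset Pt) (M : Finset (Sym2 Pt)) : Prop :=
  ∃ A B C D : Pt, s(A, B) ∈ M ∧ s(C, D) ∈ M ∧
    A ∈ frontier (convexHull ℝ (S : Set Pt)) ∧ Pierces A B C D

/-- The exceptional order type with interior point `Q`: `Q` is the unique point
of `S` interior to the convex hull of `S`, and for every other point `P` of `S`
each open half-plane bounded by the line through `Q` and `P` contains exactly
two points of `S`. -/
def ExceptionalAt (S : Finset Pt) (Q : Pt) : Prop :=
  (↑S ∩ interior (convexHull ℝ (S : Set Pt))) = {Q} ∧
  ∀ P ∈ S, P ≠ Q →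
    (S.filter (fun X => 0 < sideOf Q P X)).card = 2 ∧
    (S.filter (fun X => sideOf Q P X < 0)).card = 2

/-- The exceptional order type of Figure 1. -/
def Exceptional (S : Finset Pt) : Prop :=
  ∃ Q ∈ S, ExceptionalAt S Q

lemma sideOf_ne_zero {S : Finset Pt} (h : GeneralPosition S) {p q r : Pt} (hp : p ∈ S) (hq : q ∈ S)
    (hr : r ∈ S) (hpq : p ≠ q) (hpr : p ≠ r) (hqr : q ≠ r) : sideOf p q r ≠ 0 := by
  intro h0
  apply h p hp q hq r hr hpq hpr hqr
  rw [collinear_iff_of_mem (p₀ := p) (by simp)]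
  unfold sideOf at h0
  refine ⟨q - p, ?_⟩
  intro x hx
  simp only [Set.mem_insert_iff, Set.mem_singleton_iff] at hx
  rcases hx with rfl | rfl | rfl
  · exact ⟨0, by simp⟩
  · exact ⟨1, by simp⟩
  · by_cases h1 : q.1 - p.1 = 0
    · have h2 : q.2 - p.2 ≠ 0 := by
        intro h2
        exact hpq (Prod.ext (by linarith) (by linarith))
      refine ⟨(x.2 - p.2) / (q.2 - p.2), ?_⟩
      have h3 : x.1 - p.1 = 0 := by
        rw [h1] at h0
        have : (q.2 - p.2) * (x.1 - p.1) = 0 := by linarith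
        exact (mul_eq_zero.mp this).resolve_left h2
      ext
      · simp [h1]; linarith
      · simp; field_simp; ring
    · refine ⟨(x.1 - p.1) / (q.1 - p.1), ?_⟩
      ext
      · simp; field_simp; ring
      · simp; field_simp; linarith

/-- Supporting line at `A`. -/
def Supp (S : Finset Pt) (A : Pt) : Prop :=
  ∃ a b : ℝ, (a ≠ 0 ∨ b ≠ 0) ∧ ∀ X ∈ S, a * (X.1 - A.1) + b * (X.2 - A.2) ≤ 0

lemma sideOf_swap (A X Y : Pt) : sideOf A Y X = - sideOf A X Y := by
  unfold sideOf; ring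

lemma sideOf_self (A X : Pt) : sideOf A X X = 0 := by
  unfold sideOf; ring

lemma side_trans {S : Finset Pt} (h : GeneralPosition S) {A : Pt} (hA : A ∈ S) (hs : Supp S A)
    {X Y Z : Pt} (hX : X ∈ S) (hY : Y ∈ S) (hZ : Z ∈ S)
    (h1 : 0 < sideOf A X Y) (h2 : 0 < sideOf A Y Z) : 0 < sideOf A X Z := by
  have hXA : A ≠ X := by rintro rfl; simp [sideOf] at h1
  have hZA : A ≠ Z := by rintro rfl; simp [sideOf] at h2
  have hXZ : X ≠ Z := by
    rintro rfl
    rw [sideOf_swap] at h2; linarith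
  have hne := sideOf_ne_zero h hA hX hZ hXA hZA hXZ
  obtain ⟨a, b, hab, hf⟩ := hs
  have fX := hf X hX
  have fY := hf Y hY
  have fZ := hf Z hZ
  have key : (a * (Y.1 - A.1) + b * (Y.2 - A.2)) * sideOf A X Z =
      (a * (X.1 - A.1) + b * (X.2 - A.2)) * sideOf A Y Z +
      (a * (Z.1 - A.1) + b * (Z.2 - A.2)) * sideOf A X Y := by
    unfold sideOf; ring
  have k1 := mul_nonneg_of_nonpos_of_nonpos fX (neg_nonpos.mpr h2.le)
  have k2 := mul_nonneg_of_nonpos_of_nonpos fZ (neg_nonpos.mpr h1.le)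
  by_contra hcon
  have hlt : sideOf A X Z < 0 := lt_of_le_of_ne (not_lt.mp hcon) hne
  have k3 := mul_nonneg_of_nonpos_of_nonpos fY hlt.le
  have z1 : (a * (X.1 - A.1) + b * (X.2 - A.2)) = 0 := by
    have : (a * (X.1 - A.1) + b * (X.2 - A.2)) * sideOf A Y Z = 0 := by linarith
    exact (mul_eq_zero.mp this).resolve_right h2.ne'
  have z3 : (a * (Y.1 - A.1) + b * (Y.2 - A.2)) = 0 := by
    have : (a * (Y.1 - A.1) + b * (Y.2 - A.2)) * sideOf A X Z = 0 := by linarith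
    exact (mul_eq_zero.mp this).resolve_right hne
  have e1 : a * sideOf A X Y = 0 := by
    unfold sideOf
    linear_combination (Y.2 - A.2) * z1 - (X.2 - A.2) * z3
  have e2 : b * sideOf A X Y = 0 := by
    unfold sideOf
    linear_combination (X.1 - A.1) * z3 - (Y.1 - A.1) * z1
  rcases hab with ha | hb
  · exact h1.ne' ((mul_eq_zero.mp e1).resolve_left ha)
  · exact h1.ne' ((mul_eq_zero.mp e2).resolve_left hb)

noncomputable def Lf (S : Finset Pt) (A X : Pt) : Finset Pt := S.filter (fun Y => 0 < sideOf A X Y)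
noncomputable def Rt (S : Finset Pt) (A X : Pt) : Finset Pt := S.filter (fun Y => sideOf A X Y < 0)

lemma rank_lt {S : Finset Pt} (h : GeneralPosition S) {A : Pt} (hA : A ∈ S) (hs : Supp S A)
    {X Y : Pt} (hX : X ∈ S) (hY : Y ∈ S) (h1 : 0 < sideOf A X Y) :
    (Lf S A Y).card < (Lf S A X).card := by
  apply Finset.card_lt_card
  rw [Finset.ssubset_iff_of_subset]
  · exact ⟨Y, by simp [Lf, hY, h1], by simp [Lf, sideOf_self]⟩
  · intro Z hZ
    simp only [Lf, Finset.mem_filter] at hZ ⊢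
    exact ⟨hZ.1, side_trans h hA hs hX hY hZ.1 h1 hZ.2⟩

lemma card_LR {S : Finset Pt} (h : GeneralPosition S) {A : Pt} (hA : A ∈ S)
    {X : Pt} (hX : X ∈ S) (hXA : A ≠ X) :
    (Lf S A X).card + (Rt S A X).card + 2 = S.card := by
  have hd : Disjoint (Lf S A X) (Rt S A X) := by
    rw [Finset.disjoint_left]
    intro Y h1 h2
    simp only [Lf, Rt, Finset.mem_filter] at h1 h2
    linarith [h1.2, h2.2]
  have hu : Lf S A X ∪ Rt S A X = (S.erase A).erase X := by
    ext Y
    simp only [Lf, Rt, Finset.mem_union, Finset.mem_filter, Finset.mem_erase]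
    constructor
    · rintro (⟨hY, h1⟩ | ⟨hY, h1⟩) <;> refine ⟨?_, ?_, hY⟩ <;> rintro rfl <;> simp [sideOf] at h1 <;> linarith
    · rintro ⟨h1, h2, h3⟩
      rcases lt_or_gt_of_ne (sideOf_ne_zero h hA hX h3 hXA (Ne.symm h2) (Ne.symm h1)) with h4 | h4
      · exact Or.inr ⟨h3, h4⟩
      · exact Or.inl ⟨h3, h4⟩
  rw [← Finset.card_union_of_disjoint hd, hu, Finset.card_erase_of_mem (by simp [hX, hXA.symm]),
    Finset.card_erase_of_mem hA]
  have : 1 < S.card := Finset.one_lt_card.mpr ⟨A, hA, X, hX, hXA⟩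
  omega

lemma exists_rank {S : Finset Pt} (h : GeneralPosition S) {A : Pt} (hA : A ∈ S) (hs : Supp S A)
    (i : ℕ) (hi : i + 2 ≤ S.card) : ∃ X ∈ S, A ≠ X ∧ (Lf S A X).card = i := by
  have hmaps : ∀ X ∈ S.erase A, (Lf S A X).card ∈ Finset.range (S.card - 1) := by
    intro X hX
    have hX' := Finset.mem_erase.mp hX
    have := card_LR h hA hX'.2 (Ne.symm hX'.1)
    rw [Finset.mem_range]; omega
  have hinj : Set.InjOn (fun X => (Lf S A X).card) (S.erase A : Finset Pt) := by
    intro X hX Y hY hXY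
    simp only [Finset.coe_erase, Set.mem_sdiff, Finset.mem_coe, Set.mem_singleton_iff] at hX hY
    by_contra hne
    rcases lt_or_gt_of_ne (sideOf_ne_zero h hA hX.1 hY.1 (Ne.symm hX.2) (Ne.symm hY.2) hne) with h4 | h4
    · have := rank_lt h hA hs hY.1 hX.1 (by rw [sideOf_swap]; linarith)
      simp only at hXY; omega
    · have := rank_lt h hA hs hX.1 hY.1 h4
      simp only at hXY; omega
  have := Finset.surjOn_of_injOn_of_card_le (fun X => (Lf S A X).card) hmaps hinj
    (by rw [Finset.card_erase_of_mem hA]; simp)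
  obtain ⟨X, hX, hX2⟩ := this (show i ∈ ((Finset.range (S.card - 1) : Finset ℕ) : Set ℕ) by
    simp; omega)
  have hX' := Finset.mem_erase.mp hX
  exact ⟨X, hX'.2, Ne.symm hX'.1, hX2⟩

noncomputable def PM (S : Finset Pt) : Finset (Finset (Sym2 Pt)) :=
  S.sym2.powerset.filter (IsNCMatching S)

lemma mem_PM {S : Finset Pt} {M : Finset (Sym2 Pt)} : M ∈ PM S ↔ IsNCMatching S M := by
  simp only [PM, Finset.mem_filter, Finset.mem_powerset, and_iff_right_iff_imp]
  intro h e he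
  rw [Finset.mem_sym2_iff]
  exact h.2.1 e he

lemma pm_eq (S : Finset Pt) : pm S = (PM S).card := by
  rw [pm, ← Set.ncard_coe_finset]
  congr 1
  ext M
  simp [mem_PM]

lemma side_combo (A X p q : Pt) (s t : ℝ) (hst : s + t = 1) :
    sideOf A X (s • p + t • q) = s * sideOf A X p + t * sideOf A X q := by
  have : s = 1 - t := by linarith
  subst this
  simp [sideOf]; ring

lemma seg_pos {A X : Pt} {e : Sym2 Pt} (h : ∀ p ∈ e, 0 < sideOf A X p) :
    ∀ z ∈ seg e, 0 < sideOf A X z := by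
  induction e using Sym2.ind with
  | _ p q =>
    rintro z ⟨s, t, hs, ht, hst, rfl⟩
    rw [side_combo _ _ _ _ _ _ hst]
    have hp := h p (by simp)
    have hq := h q (by simp)
    rcases hs.eq_or_lt with h0 | h0
    · have : t = 1 := by linarith
      subst this; rw [← h0]; linarith
    · have := mul_pos h0 hp
      have := mul_nonneg ht hq.le
      linarith

lemma seg_neg {A X : Pt} {e : Sym2 Pt} (h : ∀ p ∈ e, sideOf A X p < 0) :
    ∀ z ∈ seg e, sideOf A X z < 0 := by
  have key : ∀ z, sideOf X A z = - sideOf A X z := by intro z; unfold sideOf; ring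
  intro z hz
  have := seg_pos (A := X) (X := A) (e := e) (fun p hp => by rw [key]; linarith [h p hp]) z hz
  rw [key] at this; linarith

lemma seg_zero {A X z : Pt} (hz : z ∈ seg s(A, X)) : sideOf A X z = 0 := by
  obtain ⟨s, t, hs, ht, hst, rfl⟩ := hz
  rw [side_combo _ _ _ _ _ _ hst, sideOf_self]
  simp [sideOf]

/-- No other edge of `M` is pierced by the edge at `A`. -/
def NP (A : Pt) (M : Finset (Sym2 Pt)) : Prop :=
  ∀ X, s(A, X) ∈ M → ∀ e ∈ M, e ≠ s(A, X) →
    (∀ p ∈ e, 0 < sideOf A X p) ∨ (∀ p ∈ e, sideOf A X p < 0)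

lemma mem_L {S : Finset Pt} {A X : Pt} {M1 : Finset (Sym2 Pt)} (h1 : IsNCMatching (Lf S A X) M1)
    {e} (he : e ∈ M1) : ∀ p ∈ e, 0 < sideOf A X p := by
  intro p hp
  exact (Finset.mem_filter.mp (h1.2.1 e he p hp)).2

lemma mem_R {S : Finset Pt} {A X : Pt} {M1 : Finset (Sym2 Pt)} (h1 : IsNCMatching (Rt S A X) M1)
    {e} (he : e ∈ M1) : ∀ p ∈ e, sideOf A X p < 0 := by
  intro p hp
  exact (Finset.mem_filter.mp (h1.2.1 e he p hp)).2

lemma glue {S : Finset Pt} (h : GeneralPosition S) {A : Pt} (hA : A ∈ S)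
    {X : Pt} (hX : X ∈ S) (hXA : A ≠ X) {M1 M2 : Finset (Sym2 Pt)}
    (h1 : IsNCMatching (Lf S A X) M1) (h2 : IsNCMatching (Rt S A X) M2) :
    IsNCMatching S (insert s(A, X) (M1 ∪ M2)) := by
  have zA : sideOf A X A = 0 := by simp [sideOf]
  have zX := sideOf_self A X
  refine ⟨?_, ?_, ?_, ?_⟩
  · intro e he
    simp only [Finset.mem_insert, Finset.mem_union] at he
    rcases he with rfl | he | he
    · simpa using hXA
    · exact h1.1 e he
    · exact h2.1 e he
  · intro e he p hp
    simp only [Finset.mem_insert, Finset.mem_union] at he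
    rcases he with rfl | he | he
    · rcases Sym2.mem_iff.mp hp with rfl | rfl <;> assumption
    · exact (Finset.mem_filter.mp (h1.2.1 e he p hp)).1
    · exact (Finset.mem_filter.mp (h2.2.1 e he p hp)).1
  · intro p hp
    have sA : p ∈ s(A, X) → sideOf A X p = 0 := by
      intro hp
      rcases Sym2.mem_iff.mp hp with rfl | rfl <;> assumption
    have hc : p ∈ s(A, X) ∨ 0 < sideOf A X p ∨ sideOf A X p < 0 := by
      by_cases ha : p ∈ s(A, X)
      · exact Or.inl ha
      · right
        rw [Sym2.mem_iff, not_or] at ha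
        exact (lt_or_gt_of_ne (sideOf_ne_zero h hA hX hp hXA (Ne.symm ha.1) (Ne.symm ha.2))).symm
    rcases hc with hc | hc | hc
    · refine ⟨s(A, X), ⟨by simp, hc⟩, ?_⟩
      rintro e ⟨he, hpe⟩
      simp only [Finset.mem_insert, Finset.mem_union] at he
      rcases he with rfl | he | he
      · rfl
      · have := mem_L h1 he p hpe; have := sA hc; linarith
      · have := mem_R h2 he p hpe; have := sA hc; linarith
    · obtain ⟨e, ⟨he, hpe⟩, hu⟩ := h1.2.2.1 p (Finset.mem_filter.mpr ⟨hp, hc⟩)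
      refine ⟨e, ⟨by simp [he], hpe⟩, ?_⟩
      rintro e' ⟨he', hpe'⟩
      simp only [Finset.mem_insert, Finset.mem_union] at he'
      rcases he' with rfl | he' | he'
      · have := sA hpe'; linarith
      · exact hu e' ⟨he', hpe'⟩
      · have := mem_R h2 he' p hpe'; linarith
    · obtain ⟨e, ⟨he, hpe⟩, hu⟩ := h2.2.2.1 p (Finset.mem_filter.mpr ⟨hp, hc⟩)
      refine ⟨e, ⟨by simp [he], hpe⟩, ?_⟩
      rintro e' ⟨he', hpe'⟩
      simp only [Finset.mem_insert, Finset.mem_union] at he'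
      rcases he' with rfl | he' | he'
      · have := sA hpe'; linarith
      · have := mem_L h1 he' p hpe'; linarith
      · exact hu e' ⟨he', hpe'⟩
  · intro e he f hf hef
    simp only [Finset.mem_insert, Finset.mem_union] at he hf
    rcases he with rfl | he | he <;> rcases hf with rfl | hf | hf
    · exact absurd rfl hef
    · rw [Set.disjoint_left]; intro z hz hz'
      have := seg_zero hz; have := seg_pos (mem_L h1 hf) z hz'; linarith
    · rw [Set.disjoint_left]; intro z hz hz'
      have := seg_zero hz; have := seg_neg (mem_R h2 hf) z hz'; linarith
    · rw [Set.disjoint_left]; intro z hz' hz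
      have := seg_zero hz; have := seg_pos (mem_L h1 he) z hz'; linarith
    · exact h1.2.2.2 e he f hf hef
    · rw [Set.disjoint_left]; intro z hz hz'
      have := seg_pos (mem_L h1 he) z hz; have := seg_neg (mem_R h2 hf) z hz'; linarith
    · rw [Set.disjoint_left]; intro z hz' hz
      have := seg_zero hz; have := seg_neg (mem_R h2 he) z hz'; linarith
    · rw [Set.disjoint_left]; intro z hz' hz
      have := seg_pos (mem_L h1 hf) z hz; have := seg_neg (mem_R h2 he) z hz'; linarith
    · exact h2.2.2.2 e he f hf hef

lemma edge_unique {S : Finset Pt} (h : GeneralPosition S) {A : Pt} (hA : A ∈ S)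
    {X : Pt} (hX : X ∈ S) (hXA : A ≠ X) {M1 M2 : Finset (Sym2 Pt)}
    (h1 : IsNCMatching (Lf S A X) M1) (h2 : IsNCMatching (Rt S A X) M2) {Y : Pt}
    (hY : s(A, Y) ∈ insert s(A, X) (M1 ∪ M2)) : Y = X := by
  have := (glue h hA hX hXA h1 h2).2.2.1 A hA
  have e := this.unique ⟨hY, by simp⟩ ⟨Finset.mem_insert_self _ _, by simp⟩
  exact Sym2.congr_right.mp e

lemma glue_NP {S : Finset Pt} (h : GeneralPosition S) {A : Pt} (hA : A ∈ S)
    {X : Pt} (hX : X ∈ S) (hXA : A ≠ X) {M1 M2 : Finset (Sym2 Pt)}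
    (h1 : IsNCMatching (Lf S A X) M1) (h2 : IsNCMatching (Rt S A X) M2) :
    NP A (insert s(A, X) (M1 ∪ M2)) := by
  intro Y hY e he hne
  obtain rfl := edge_unique h hA hX hXA h1 h2 hY
  simp only [Finset.mem_insert, Finset.mem_union] at he
  rcases he with rfl | he | he
  · exact absurd rfl hne
  · exact Or.inl (mem_L h1 he)
  · exact Or.inr (mem_R h2 he)

lemma glue_L {S : Finset Pt} {A : Pt}
    {X : Pt} {M1 M2 : Finset (Sym2 Pt)}
    (h1 : IsNCMatching (Lf S A X) M1) (h2 : IsNCMatching (Rt S A X) M2) :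
    (insert s(A, X) (M1 ∪ M2)).filter (fun e => ∀ p ∈ e, 0 < sideOf A X p) = M1 := by
  ext e
  simp only [Finset.mem_filter, Finset.mem_insert, Finset.mem_union]
  constructor
  · rintro ⟨rfl | he | he, hp⟩
    · have := hp X (by simp); rw [sideOf_self] at this; linarith
    · exact he
    · have h3 := mem_R h2 he
      have a := hp _ e.out_fst_mem; have b := h3 _ e.out_fst_mem; linarith
  · intro he
    exact ⟨Or.inr (Or.inl he), mem_L h1 he⟩

lemma glue_R {S : Finset Pt} {A : Pt}
    {X : Pt} {M1 M2 : Finset (Sym2 Pt)}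
    (h1 : IsNCMatching (Lf S A X) M1) (h2 : IsNCMatching (Rt S A X) M2) :
    (insert s(A, X) (M1 ∪ M2)).filter (fun e => ∀ p ∈ e, sideOf A X p < 0) = M2 := by
  ext e
  simp only [Finset.mem_filter, Finset.mem_insert, Finset.mem_union]
  constructor
  · rintro ⟨rfl | he | he, hp⟩
    · have := hp X (by simp); rw [sideOf_self] at this; linarith
    · have h3 := mem_L h1 he
      have a := hp _ e.out_fst_mem; have b := h3 _ e.out_fst_mem; linarith
    · exact he
  · intro he
    exact ⟨Or.inr (Or.inr he), mem_R h2 he⟩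

lemma gp_mono {S T : Finset Pt} (h : GeneralPosition S) (hT : T ⊆ S) : GeneralPosition T :=
  fun p hp q hq r hr => h p (hT hp) q (hT hq) r (hT hr)

lemma count_step (k : ℕ) {S : Finset Pt} (hc : S.card = 2 * (k + 1)) (h : GeneralPosition S)
    {A : Pt} (hA : A ∈ S) (hs : Supp S A)
    (ih : ∀ j ≤ k, ∀ T : Finset Pt, T.card = 2 * j → GeneralPosition T → catalan j ≤ (PM T).card) :
    catalan (k + 1) ≤ ((PM S).filter (NP A)).card := by
  have hex : ∀ i : Fin (k + 1), ∃ X ∈ S, A ≠ X ∧ (Lf S A X).card = 2 * (i : ℕ) := fun i =>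
    exists_rank h hA hs (2 * i) (by have := i.2; omega)
  choose X hXS hXA hXc using hex
  rw [catalan_succ]
  calc ∑ i : Fin k.succ, catalan i * catalan (k - i)
      ≤ ∑ i : Fin (k + 1), (PM (Lf S A (X i)) ×ˢ PM (Rt S A (X i))).card := by
        apply Finset.sum_le_sum
        intro i _
        rw [Finset.card_product]
        have hi := i.2
        apply Nat.mul_le_mul
        · exact ih i (by omega) _ (hXc i) (gp_mono h (Finset.filter_subset _ _))
        · refine ih (k - i) (by omega) _ ?_ (gp_mono h (Finset.filter_subset _ _))
          have := card_LR h hA (hXS i) (hXA i)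
          have := hXc i
          omega
    _ = (Finset.univ.sigma (fun i : Fin (k + 1) =>
          PM (Lf S A (X i)) ×ˢ PM (Rt S A (X i)))).card := (Finset.card_sigma _ _).symm
    _ ≤ _ := by
        apply Finset.card_le_card_of_injOn
          (fun t => insert s(A, X t.1) (t.2.1 ∪ t.2.2))
        · rintro ⟨i, M1, M2⟩ ht
          simp only [Finset.coe_sigma, Set.mem_sigma_iff, Finset.mem_coe, Finset.mem_product, mem_PM] at ht
          obtain ⟨-, h1, h2⟩ := ht
          simp only [Finset.coe_filter, Set.mem_ofPred_eq, mem_PM]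
          exact ⟨glue h hA (hXS i) (hXA i) h1 h2, glue_NP h hA (hXS i) (hXA i) h1 h2⟩
        · rintro ⟨i, M1, M2⟩ ht ⟨j, N1, N2⟩ ht' heq
          simp only [Finset.coe_sigma, Set.mem_sigma_iff, Finset.mem_coe, Finset.mem_product, mem_PM] at ht ht'
          obtain ⟨-, h1, h2⟩ := ht
          obtain ⟨-, h1', h2'⟩ := ht'
          simp only at heq
          have hX : X i = X j := edge_unique h hA (hXS j) (hXA j) h1' h2'
            (by rw [← heq]; exact Finset.mem_insert_self _ _)
          have hij : i = j := by
            have a := hXc i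
            rw [hX, hXc j] at a
            ext; omega
          subst hij
          have a := glue_L h1 h2
          rw [heq, glue_L h1' h2'] at a
          have b := glue_R h1 h2
          rw [heq, glue_R h1' h2'] at b
          rw [a, b]

lemma catalan_le (k : ℕ) : ∀ S : Finset Pt, S.card = 2 * k → GeneralPosition S →
    catalan k ≤ (PM S).card := by
  induction k using Nat.strong_induction_on with
  | _ k ih =>
    intro S hc h
    rcases k with _ | k
    · have : S = ∅ := by simpa using hc
      subst this
      rw [catalan_zero, Nat.succ_le_iff, Finset.card_pos]
      exact ⟨∅, mem_PM.mpr (by simp [IsNCMatching])⟩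
    · have hne : S.Nonempty := by rw [← Finset.card_pos]; omega
      obtain ⟨A, hA, hmax⟩ := S.exists_max_image (fun p => p.1) hne
      refine (count_step k hc h hA ⟨1, 0, by simp, fun X hX => ?_⟩
        (fun j hj => ih j (by omega))).trans (Finset.card_le_card (Finset.filter_subset _ _))
      have := hmax X hX
      linarith

lemma supp_of_frontier {S : Finset Pt} (h : GeneralPosition S) {A B C : Pt}
    (hA : A ∈ S) (hB : B ∈ S) (hC : C ∈ S) (hAB : A ≠ B) (hAC : A ≠ C) (hBC : B ≠ C)
    (hf : A ∈ frontier (convexHull ℝ (S : Set Pt))) : Supp S A := by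
  have hni : A ∉ interior (convexHull ℝ (S : Set Pt)) := hf.2
  have hconv := convex_convexHull ℝ (S : Set Pt)
  have hint : (interior (convexHull ℝ (S : Set Pt))).Nonempty := by
    rw [interior_convexHull_nonempty_iff_affineSpan_eq_top]
    have hind : AffineIndependent ℝ ![A, B, C] := by
      rw [affineIndependent_iff_not_collinear_set]
      exact h A hA B hB C hC hAB hAC hBC
    have ht := (hind.affineSpan_eq_top_iff_card_eq_finrank_add_one).mpr (by simp)
    rw [eq_top_iff, ← ht]
    apply affineSpan_mono
    rintro _ ⟨i, rfl⟩
    fin_cases i <;> simpa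
  obtain ⟨f, hlt⟩ := geometric_hahn_banach_open_point hconv.interior isOpen_interior hni
  have hle : ∀ x ∈ S, f x ≤ f A := by
    intro x hx
    have hx1 : x ∈ closure (interior (convexHull ℝ (S : Set Pt))) := by
      rw [hconv.closure_interior_eq_closure_of_nonempty_interior hint]
      exact subset_closure (subset_convexHull ℝ _ hx)
    have hcl : closure (interior (convexHull ℝ (S : Set Pt))) ⊆ {y | f y ≤ f A} :=
      closure_minimal (fun y hy => (hlt y hy).le) (isClosed_le f.continuous continuous_const)
    exact hcl hx1
  have hform : ∀ x : Pt, f x = f (1, 0) * x.1 + f (0, 1) * x.2 := by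
    intro x
    have : x = x.1 • ((1, 0) : Pt) + x.2 • ((0, 1) : Pt) := by ext <;> simp
    conv_lhs => rw [this, map_add, map_smul, map_smul]
    simp only [smul_eq_mul]; ring
  refine ⟨f (1, 0), f (0, 1), ?_, ?_⟩
  · by_contra hcon
    push Not at hcon
    obtain ⟨y, hy⟩ := hint
    have := hlt y hy
    rw [hform y, hform A, hcon.1, hcon.2] at this
    simp at this
  · intro x hx
    have := hle x hx
    rw [hform x, hform A] at this
    linarith

lemma side_line {A B z : Pt} (hz : z ∈ affineSpan ℝ ({A, B} : Set Pt)) : sideOf A B z = 0 := by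
  obtain ⟨t, rfl⟩ := mem_affineSpan_pair_iff_exists_lineMap_eq.mp hz
  simp [AffineMap.lineMap_apply, sideOf]; ring

/-- If a set `S` of `2k` points in general position has a
non-crossing perfect matching with the piercing property, then
`pm S > C_k`. -/
theorem catalan_lt_pm_of_piercing (k : ℕ) (S : Finset Pt)
    (hcard : S.card = 2 * k) (hgp : GeneralPosition S)
    (M : Finset (Sym2 Pt)) (hM : IsNCMatching S M)
    (hpierce : HasPiercing S M) :
    catalan k < pm S := by
  obtain ⟨A, B, C, D, hAB, hCD, hfr, hdis, z, hz1, hz2⟩ := hpierce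
  have hA : A ∈ S := hM.2.1 _ hAB A (by simp)
  have hB : B ∈ S := hM.2.1 _ hAB B (by simp)
  have hC : C ∈ S := hM.2.1 _ hCD C (by simp)
  have hne : A ≠ B := fun e => hM.1 _ hAB (by simpa using e)
  have hAC : A ≠ C := by
    rintro rfl
    exact Set.disjoint_left.mp hdis (left_mem_segment ℝ _ _) (left_mem_segment ℝ _ _)
  have hBC : B ≠ C := by
    rintro rfl
    exact Set.disjoint_left.mp hdis (right_mem_segment ℝ _ _) (left_mem_segment ℝ _ _)
  have hs := supp_of_frontier hgp hA hB hC hne hAC hBC hfr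
  have hedge : s(C, D) ≠ s(A, B) := by
    intro e
    have : C ∈ s(A, B) := by rw [← e]; simp
    rcases Sym2.mem_iff.mp this with h | h
    · exact hAC h.symm
    · exact hBC h.symm
  have hnp : ¬ NP A M := by
    intro hnp
    have h0 := side_line hz1
    rcases hnp B hAB _ hCD hedge with h | h
    · have := seg_pos h z hz2
      linarith
    · have := seg_neg h z hz2
      linarith
  have hpos : 0 < S.card := Finset.card_pos.mpr ⟨A, hA⟩
  obtain ⟨k, rfl⟩ : ∃ j, k = j + 1 := ⟨k - 1, by omega⟩
  rw [pm_eq]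
  refine (count_step k hcard hgp hA hs (fun j _ => catalan_le j)).trans_lt ?_
  apply Finset.card_lt_card
  rw [Finset.filter_ssubset]
  exact ⟨M, mem_PM.mpr hM, hnp⟩
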